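/- Let X ⊆ ℝ, let B ⊆ X × X be closed in (X[≤])², and let W ⊆ X × X be such that p₀(W) ∩ p₀(B) = ∅ and p₁(W) ∩ p₁(B) = ∅, where p₀, p₁ : X × X → X are the coordinate projections. Suppose that both X \ p₀(B) and X \ p₁(B) can be written as countable unions of subsets of X that are relatively closed in X with respect to the Euclidean subspace topology. Then W has the covering property with respect to B in (X[≤])². -/

import Mathlib

/-- The Sorgenfrey (lower limit) topology on `ℝ`, generated by half-open
intervals `[a, b)` with `a < b`. -/
def sorgenfrey : TopologicalSpace ℝ :=
  TopologicalSpace.generateFrom {s : Set ℝ | ∃ a b : ℝ, a < b ∧ s = Set.Ico a b}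

/-- The Sorgenfrey subspace topology on a set of reals `X`, i.e. `X[≤]`. -/
def sorgenfreySub (X : Set ℝ) : TopologicalSpace X :=
  sorgenfrey.induced Subtype.val

/-- The product topology `(X[≤])²` on `X × X`. -/
def sorgenfreySq (X : Set ℝ) : TopologicalSpace (X × X) :=
  @instTopologicalSpaceProd X X (sorgenfreySub X) (sorgenfreySub X)

/-- `A` has the covering property with respect to `B`: there is a countable
family of open sets covering `A` whose closures are disjoint from `B`. -/
def CoveringProperty {Z : Type*} [TopologicalSpace Z] (A B : Set Z) : Prop :=
  ∃ U : ℕ → Set Z, (∀ n, IsOpen (U n)) ∧ A ⊆ ⋃ n, U n ∧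
    ∀ n, closure (U n) ∩ B = ∅

/-!
`W` lies in the product of the complements of the projections of `B`, a countable union of products
`F ×ˢ H` of closed sets, and the covering property pulls back along continuous maps. So it suffices
to cover `s ×ˢ t` in the square of the whole Sorgenfrey line, where `s` and `t` have closures that
miss the projections of `B` and `s ×ˢ t` misses the closure of `B`.

For `a`, `b` in a countable dense set, let `U` be the union of the boxes `[x, a) × [y, b)` with
corner `(x, y) ∈ s ×ˢ t` that miss `B`; these open sets cover `s ×ˢ t`. If `p ∈ B` were in the
closure of `U`, then some box `[x, a) × [y, b)` of this kind would meet each neighborhood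
`[p₀, a') × [p₁, b')` of `p`. For `a'`, `b'` close to `p`, the intervals `[p₀, a')` and `[p₁, b')`
miss `s` and `t`, so `x < p₀` and `y < p₁`: the box contains `p`, although it misses `B`.
-/

open Set Topology

namespace CoveringProperty

variable {Y Z ι : Type*} [TopologicalSpace Y] [TopologicalSpace Z]

theorem mono {A A' B : Set Z} (h : CoveringProperty A B) (hA : A' ⊆ A) :
    CoveringProperty A' B :=
  let ⟨U, hU, hAU, hUB⟩ := h
  ⟨U, hU, hA.trans hAU, hUB⟩

theorem of_countable [Countable ι] {A B : Set Z} (U : ι → Set Z) (hU : ∀ i, IsOpen (U i))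
    (hA : A ⊆ ⋃ i, U i) (hB : ∀ i, Disjoint (closure (U i)) B) : CoveringProperty A B := by
  cases isEmpty_or_nonempty ι with
  | inl _ =>
    rw [iUnion_of_empty] at hA
    exact ⟨fun _ ↦ ∅, fun _ ↦ isOpen_empty, hA.trans (empty_subset _), by simp⟩
  | inr _ =>
    obtain ⟨e, he⟩ := exists_surjective_nat ι
    exact ⟨U ∘ e, fun n ↦ hU (e n), hA.trans (he.iUnion_comp U).ge,
      fun n ↦ (hB (e n)).inter_eq⟩

theorem iUnion [Countable ι] {A : ι → Set Z} {B : Set Z} (h : ∀ i, CoveringProperty (A i) B) :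
    CoveringProperty (⋃ i, A i) B := by
  choose U hU hAU hUB using h
  refine of_countable (fun i : ι × ℕ ↦ U i.1 i.2) (fun i ↦ hU i.1 i.2) ?_
    (fun i ↦ disjoint_iff_inter_eq_empty.2 (hUB i.1 i.2))
  rw [iUnion_prod']
  exact iUnion_mono hAU

theorem of_image {f : Y → Z} (hf : Continuous f) {A B : Set Y}
    (h : CoveringProperty (f '' A) (f '' B)) : CoveringProperty A B := by
  obtain ⟨U, hU, hAU, hUB⟩ := h
  refine of_countable (fun n ↦ f ⁻¹' U n) (fun n ↦ (hU n).preimage hf) ?_ fun n ↦ ?_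
  · rwa [← preimage_iUnion, ← image_subset_iff]
  · have hpre : Disjoint (f ⁻¹' closure (U n)) B :=
      disjoint_image_right.1 (disjoint_iff_inter_eq_empty.2 (hUB n))
    exact hpre.mono_left (hf.closure_preimage_subset (U n))

end CoveringProperty

/-- An ordered space carries the lower limit topology if the half-open intervals `[x, b)`, `x < b`,
form a neighborhood basis at every point `x`. This abstracts the Sorgenfrey line; a greatest element
is excluded, since it would have no such interval. -/
class LowerLimitTopology (α : Type*) [TopologicalSpace α] [Preorder α] : Prop where
  nhds_basis_Ico : ∀ x : α, (𝓝 x).HasBasis (x < ·) (Ico x)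

namespace LowerLimitTopology

/-- The union of all boxes `[x, a) × [y, b)` with lower corner `(x, y)` in `s ×ˢ t` and fixed upper
corner `c = (a, b)` that miss `B`. These sets are the members of the countable cover of `s ×ˢ t`. -/
def boxUnion {α β : Type*} [Preorder α] [Preorder β] (s : Set α) (t : Set β)
    (B : Set (α × β)) (c : α × β) : Set (α × β) :=
  ⋃ w ∈ {w ∈ s ×ˢ t | Disjoint (Ico w.1 c.1 ×ˢ Ico w.2 c.2) B}, Ico w.1 c.1 ×ˢ Ico w.2 c.2

section Preorder

variable {α : Type*} [TopologicalSpace α] [Preorder α] [LowerLimitTopology α]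

theorem isOpen_Ico (a b : α) : IsOpen (Ico a b) :=
  isOpen_iff_mem_nhds.2 fun x hx ↦
    (nhds_basis_Ico x).mem_iff.2 ⟨b, hx.2, Ico_subset_Ico_left hx.1⟩

theorem exists_disjoint_Ico_of_notMem_closure {s : Set α} {x : α} (hx : x ∉ closure s) :
    ∃ b > x, Disjoint (Ico x b) s := by
  obtain ⟨b, hxb, hb⟩ := (nhds_basis_Ico x).mem_iff.1 (isClosed_closure.compl_mem_nhds hx)
  exact ⟨b, hxb, (disjoint_compl_left.mono_right subset_closure).mono_left hb⟩

theorem exists_btwn_of_dense [DenselyOrdered α] {D : Set α} (hD : Dense D) {x y : α}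
    (hxy : x < y) : ∃ d ∈ D, x < d ∧ d < y := by
  obtain ⟨z, hxz, hzy⟩ := exists_between hxy
  obtain ⟨d, hdD, hd⟩ := hD.exists_mem_open (isOpen_Ico z y) ⟨z, le_rfl, hzy⟩
  exact ⟨d, hdD, hxz.trans_le hd.1, hd.2⟩

variable {β : Type*} [TopologicalSpace β] [Preorder β] [LowerLimitTopology β]
  {s : Set α} {t : Set β} {B : Set (α × β)}

theorem isOpen_boxUnion (c : α × β) : IsOpen (boxUnion s t B c) :=
  isOpen_biUnion fun w _ ↦ (isOpen_Ico w.1 c.1).prod (isOpen_Ico w.2 c.2)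

theorem exists_mem_boxUnion [DenselyOrdered α] [DenselyOrdered β] {D : Set α} {E : Set β}
    (hD : Dense D) (hE : Dense E) {w : α × β} (hw : w ∈ s ×ˢ t) (hwB : w ∉ closure B) :
    ∃ c ∈ D ×ˢ E, w ∈ boxUnion s t B c := by
  have hnhds : (closure B)ᶜ ∈ 𝓝 w := isClosed_closure.compl_mem_nhds hwB
  obtain ⟨⟨a, b⟩, ⟨hwa, hwb⟩, hab⟩ :=
    ((nhds_basis_Ico w.1).prod_nhds (nhds_basis_Ico w.2)).mem_iff.1 hnhds
  obtain ⟨d, hdD, hwd, hda⟩ := exists_btwn_of_dense hD hwa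
  obtain ⟨e, heE, hwe, heb⟩ := exists_btwn_of_dense hE hwb
  have hbox : Ico w.1 d ×ˢ Ico w.2 e ⊆ (closure B)ᶜ :=
    (prod_mono (Ico_subset_Ico_right hda.le) (Ico_subset_Ico_right heb.le)).trans hab
  have hdisj : Disjoint (Ico w.1 d ×ˢ Ico w.2 e) B :=
    (disjoint_compl_left.mono_right subset_closure).mono_left hbox
  exact ⟨(d, e), ⟨hdD, heE⟩, mem_iUnion₂.2 ⟨w, ⟨hw, hdisj⟩, ⟨le_rfl, hwd⟩, le_rfl, hwe⟩⟩

end Preorder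

section LinearOrder

variable {α β : Type*} [TopologicalSpace α] [LinearOrder α] [LowerLimitTopology α]
  [TopologicalSpace β] [LinearOrder β] [LowerLimitTopology β]
  {s : Set α} {t : Set β} {B : Set (α × β)}

theorem disjoint_closure_boxUnion (hs : Disjoint (closure s) (Prod.fst '' B))
    (ht : Disjoint (closure t) (Prod.snd '' B)) (c : α × β) :
    Disjoint (closure (boxUnion s t B c)) B := by
  refine disjoint_left.2 fun p hp hpB ↦ ?_
  obtain ⟨a, hpa, ha⟩ := exists_disjoint_Ico_of_notMem_closure
    (disjoint_right.1 hs (mem_image_of_mem Prod.fst hpB))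
  obtain ⟨b, hpb, hb⟩ := exists_disjoint_Ico_of_notMem_closure
    (disjoint_right.1 ht (mem_image_of_mem Prod.snd hpB))
  obtain ⟨q, ⟨hq₁, hq₂⟩, hqU⟩ := mem_closure_iff.1 hp _
    ((isOpen_Ico p.1 a).prod (isOpen_Ico p.2 b)) ⟨⟨le_rfl, hpa⟩, le_rfl, hpb⟩
  obtain ⟨w, ⟨⟨hws, hwt⟩, hwB⟩, hqw₁, hqw₂⟩ := mem_iUnion₂.1 hqU
  have hw₁ : w.1 < p.1 :=
    not_le.1 fun h ↦ disjoint_left.1 ha ⟨h, hqw₁.1.trans_lt hq₁.2⟩ hws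
  have hw₂ : w.2 < p.2 :=
    not_le.1 fun h ↦ disjoint_left.1 hb ⟨h, hqw₂.1.trans_lt hq₂.2⟩ hwt
  exact disjoint_left.1 hwB
    ⟨⟨hw₁.le, hq₁.1.trans_lt hqw₁.2⟩, hw₂.le, hq₂.1.trans_lt hqw₂.2⟩ hpB

variable [DenselyOrdered α] [DenselyOrdered β]
  [TopologicalSpace.SeparableSpace α] [TopologicalSpace.SeparableSpace β]

theorem coveringProperty_prod (hs : Disjoint (closure s) (Prod.fst '' B))
    (ht : Disjoint (closure t) (Prod.snd '' B)) (hB : Disjoint (s ×ˢ t) (closure B)) :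
    CoveringProperty (s ×ˢ t) B := by
  obtain ⟨D, hDc, hD⟩ := TopologicalSpace.exists_countable_dense α
  obtain ⟨E, hEc, hE⟩ := TopologicalSpace.exists_countable_dense β
  have := (hDc.prod hEc).to_subtype
  refine .of_countable (fun c : ↥(D ×ˢ E) ↦ boxUnion s t B c) (fun c ↦ isOpen_boxUnion c.1)
    (fun w hw ↦ ?_) (fun c ↦ disjoint_closure_boxUnion hs ht c.1)
  obtain ⟨c, hc, hwc⟩ := exists_mem_boxUnion hD hE hw (disjoint_left.1 hB hw)
  exact mem_iUnion.2 ⟨⟨c, hc⟩, hwc⟩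

end LinearOrder

end LowerLimitTopology

section Inducing

open LowerLimitTopology

variable {Y Y' Z : Type*} [TopologicalSpace Y] [TopologicalSpace Y'] [TopologicalSpace Z]

theorem disjoint_closure_image_of_isInducing {f : Y → Z} (hf : IsInducing f) {s t : Set Y}
    (hs : IsClosed s) (hst : Disjoint s t) : Disjoint (closure (f '' s)) (f '' t) := by
  rwa [disjoint_image_right, ← hf.closure_eq_preimage_closure_image, hs.closure_eq]

variable {α β : Type*} [LinearOrder α] [LinearOrder β] [TopologicalSpace α] [TopologicalSpace β]
  [LowerLimitTopology α] [LowerLimitTopology β] [DenselyOrdered α] [DenselyOrdered β]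
  [TopologicalSpace.SeparableSpace α] [TopologicalSpace.SeparableSpace β]
  {f : Y → α} {g : Y' → β} {B : Set (Y × Y')}

theorem coveringProperty_prod_of_isClosed (hf : IsInducing f) (hg : IsInducing g)
    (hB : IsClosed B) {F : Set Y} {H : Set Y'} (hF : IsClosed F) (hH : IsClosed H)
    (hFB : Disjoint F (Prod.fst '' B)) (hHB : Disjoint H (Prod.snd '' B)) :
    CoveringProperty (F ×ˢ H) B := by
  have hfst : Prod.fst '' (Prod.map f g '' B) = f '' (Prod.fst '' B) := by
    simp only [image_image, Prod.map_fst]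
  have hsnd : Prod.snd '' (Prod.map f g '' B) = g '' (Prod.snd '' B) := by
    simp only [image_image, Prod.map_snd]
  have hprod : Disjoint B (F ×ˢ H) :=
    disjoint_left.2 fun p hpB hp ↦ disjoint_left.1 hFB hp.1 (mem_image_of_mem Prod.fst hpB)
  refine .of_image (hf.prodMap hg).continuous ?_
  rw [prodMap_image_prod]
  refine coveringProperty_prod ?_ ?_ ?_
  · exact hfst ▸ disjoint_closure_image_of_isInducing hf hF hFB
  · exact hsnd ▸ disjoint_closure_image_of_isInducing hg hH hHB
  · rw [← prodMap_image_prod]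
    exact (disjoint_closure_image_of_isInducing (hf.prodMap hg) hB hprod).symm

theorem coveringProperty_iUnion_prod_iUnion {ι κ : Type*} [Countable ι] [Countable κ]
    (hf : IsInducing f) (hg : IsInducing g) (hB : IsClosed B)
    {F : ι → Set Y} {H : κ → Set Y'} (hF : ∀ i, IsClosed (F i)) (hH : ∀ j, IsClosed (H j))
    (hFB : Disjoint (⋃ i, F i) (Prod.fst '' B)) (hHB : Disjoint (⋃ j, H j) (Prod.snd '' B)) :
    CoveringProperty ((⋃ i, F i) ×ˢ ⋃ j, H j) B := by
  rw [disjoint_iUnion_left] at hFB hHB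
  rw [← iUnion_prod]
  exact .iUnion fun i ↦
    coveringProperty_prod_of_isClosed hf hg hB (hF i.1) (hH i.2) (hFB i.1) (hHB i.2)

end Inducing

theorem nhds_sorgenfrey (x : ℝ) : @nhds ℝ sorgenfrey x = 𝓝[≥] x := by
  refine le_antisymm ((nhdsGE_basis x).ge_iff.2 fun b hb ↦ ?_) ?_
  · have hopen : IsOpen[sorgenfrey] (Ico x b) :=
      TopologicalSpace.isOpen_generateFrom_of_mem ⟨x, b, hb, rfl⟩
    exact @IsOpen.mem_nhds ℝ sorgenfrey x _ hopen (left_mem_Ico.2 hb)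
  · rw [sorgenfrey, TopologicalSpace.nhds_generateFrom]
    refine le_iInf₂ fun s hs ↦ Filter.le_principal_iff.2 ?_
    obtain ⟨hx, a, b, -, rfl⟩ := hs
    exact Ico_mem_nhdsGE_of_mem hx

theorem lowerLimitTopology_sorgenfrey : @LowerLimitTopology ℝ sorgenfrey _ :=
  @LowerLimitTopology.mk ℝ sorgenfrey _ fun x ↦ nhds_sorgenfrey x ▸ nhdsGE_basis x

theorem separableSpace_sorgenfrey : @TopologicalSpace.SeparableSpace ℝ sorgenfrey := by
  let := sorgenfrey
  have := lowerLimitTopology_sorgenfrey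
  refine ⟨range ((↑) : ℚ → ℝ), countable_range _, fun x ↦ ?_⟩
  refine (mem_closure_iff_nhds_basis (LowerLimitTopology.nhds_basis_Ico x)).2 fun b hb ↦ ?_
  obtain ⟨q, hxq, hqb⟩ := exists_rat_btwn hb
  exact ⟨q, mem_range_self q, hxq.le, hqb⟩

theorem sorgenfreySub_le (X : Set ℝ) : sorgenfreySub X ≤ instTopologicalSpaceSubtype :=
  induced_mono (le_of_nhds_le_nhds fun x ↦ (nhds_sorgenfrey x).trans_le nhdsWithin_le_nhds)

theorem stmt14_general (X : Set ℝ) (B W : Set (X × X))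
    (hB : IsClosed[sorgenfreySq X] B)
    (h0 : Prod.fst '' W ∩ Prod.fst '' B = ∅)
    (h1 : Prod.snd '' W ∩ Prod.snd '' B = ∅)
    (hF : ∃ F : ℕ → Set X, (∀ n, IsClosed[sorgenfreySub X] (F n)) ∧
      Set.univ \ Prod.fst '' B = ⋃ n, F n)
    (hH : ∃ H : ℕ → Set X, (∀ n, IsClosed[sorgenfreySub X] (H n)) ∧
      Set.univ \ Prod.snd '' B = ⋃ n, H n) :
    @CoveringProperty _ (sorgenfreySq X) W B := by
  obtain ⟨F, hFc, hF⟩ := hF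
  obtain ⟨H, hHc, hH⟩ := hH
  let := sorgenfrey
  let := sorgenfreySub X
  have := lowerLimitTopology_sorgenfrey
  have := separableSpace_sorgenfrey
  have hval : IsInducing (Subtype.val : X → ℝ) := ⟨rfl⟩
  have hcover : CoveringProperty ((⋃ n, F n) ×ˢ ⋃ n, H n) B :=
    coveringProperty_iUnion_prod_iUnion hval hval hB hFc hHc
      (hF ▸ disjoint_sdiff_left) (hH ▸ disjoint_sdiff_left)
  rw [← hF, ← hH] at hcover
  refine hcover.mono fun w hw ↦ ⟨⟨trivial, ?_⟩, trivial, ?_⟩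
  · exact disjoint_left.1 (disjoint_iff_inter_eq_empty.2 h0) (mem_image_of_mem Prod.fst hw)
  · exact disjoint_left.1 (disjoint_iff_inter_eq_empty.2 h1) (mem_image_of_mem Prod.snd hw)

/-- Let `B ⊆ X × X` be closed in `(X[≤])²` and let `W ⊆ X × X`
have both projections disjoint from the corresponding projections of `B`.  If
`X \ p₀(B)` and `X \ p₁(B)` are countable unions of relatively Euclidean-closed
subsets of `X`, then `W` has the covering property with respect to `B` in
`(X[≤])²`. -/
theorem stmt14 (X : Set ℝ) (B W : Set (X × X))
    (hB : @IsClosed _ (sorgenfreySq X) B)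
    (h0 : Prod.fst '' W ∩ Prod.fst '' B = ∅)
    (h1 : Prod.snd '' W ∩ Prod.snd '' B = ∅)
    (hF : ∃ F : ℕ → Set X, (∀ n, IsClosed (F n)) ∧
      Set.univ \ Prod.fst '' B = ⋃ n, F n)
    (hH : ∃ H : ℕ → Set X, (∀ n, IsClosed (H n)) ∧
      Set.univ \ Prod.snd '' B = ⋃ n, H n) :
    @CoveringProperty _ (sorgenfreySq X) W B := by
  obtain ⟨F, hFc, hF⟩ := hF
  obtain ⟨H, hHc, hH⟩ := hH
  exact stmt14_general X B W hB h0 h1 ⟨F, fun n ↦ (hFc n).mono (sorgenfreySub_le X), hF⟩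
    ⟨H, fun n ↦ (hHc n).mono (sorgenfreySub_le X), hH⟩
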